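/- Let (R, m) be a Noetherian local ring, I, J ideals, and b, c positive integers. Then ν(J^c + I^b) ≥ bc if and only if ν(J) ≥ b and ν(I) ≥ c, where ν denotes order with respect to m. (This identifies the singular locus of the intersection of two basic objects: Sing(J^c + I^b, bc) = Sing(J, b) ∩ Sing(I, c) pointwise.) -/

import Mathlib

/-- A Noetherian local ring is regular if its maximal ideal is generated by
`d` elements, where `d` is the Krull dimension. -/
def IsRegularLocal (R : Type*) [CommRing R] [IsLocalRing R] : Prop :=
  IsNoetherianRing R ∧
    ∃ (d : ℕ) (s : Fin d → R),
      Ideal.span (Set.range s) = IsLocalRing.maximalIdeal R ∧ ringKrullDim R = d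

/-- The order of an ideal `K` with respect to an ideal `m`:
`ν(K) = sup { s : K ⊆ m^s }`. -/
noncomputable def idealOrder {R : Type*} [CommRing R] (m K : Ideal R) : ℕ∞ :=
  sSup {c : ℕ∞ | ∃ s : ℕ, c = s ∧ K ≤ m ^ s}

open MvPolynomial in
theorem eval2_homog_smul {R S : Type*} [CommRing R] [CommRing S] {d n : ℕ} (f : R →+* S)
    (G : MvPolynomial (Fin d) R) (hG : G.IsHomogeneous n) (a : S) (t : Fin d → S) :
    eval₂ f (fun i => a * t i) G = a ^ n * eval₂ f t G := by
  rw [eval₂_eq', eval₂_eq', Finset.mul_sum]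
  refine Finset.sum_congr rfl fun m hm => ?_
  have h : ∑ i, m i = n := by
    rw [hG.degree_eq_sum_deg_support hm]
    exact (Finset.sum_subset (Finset.subset_univ _) fun i _ hi => by simpa using hi).symm
  simp only [mul_pow, Finset.prod_mul_distrib, Finset.prod_pow_eq_pow_sum, h]
  ring

open MvPolynomial IsLocalRing in
/-- Generators of the maximal ideal of a regular local ring satisfy no homogeneous relation
with nonzero reduction. -/
theorem no_relation {R : Type*} [CommRing R] [IsLocalRing R] [IsNoetherianRing R]
    {d n : ℕ} (s : Fin d → R) (hs : Ideal.span (Set.range s) = maximalIdeal R)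
    (hd : ringKrullDim R = d) (G : MvPolynomial (Fin d) R) (hG : G.IsHomogeneous n)
    (h0 : eval s G = 0) : map (residue R) G = 0 := by
  by_contra hne
  rcases Nat.eq_zero_or_pos n with rfl | hn
  · obtain ⟨r, rfl⟩ : ∃ r, G = C r := ⟨_, (totalDegree_eq_zero_iff_eq_C.mp
      (Nat.le_zero.mp hG.totalDegree_le))⟩
    simp only [eval_C] at h0
    simp [h0] at hne
  let φ : Polynomial R →+* Polynomial (ResidueField R) := Polynomial.mapRingHom (residue R)
  have hφs : Function.Surjective φ := Polynomial.map_surjective _ residue_surjective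
  set P : Ideal (Polynomial R) := (maximalIdeal R).map Polynomial.C with hP
  have hker : ∀ x, x ∈ P ↔ φ x = 0 := by
    intro x
    rw [← RingHom.mem_ker, Polynomial.ker_mapRingHom, ker_residue]
  have hPp : P.IsPrime := by
    have : P = RingHom.ker φ := by ext x; rw [hker, RingHom.mem_ker]
    rw [this]; exact RingHom.ker_isPrime φ
  have hht : P.height = d := by
    rw [hP, Polynomial.height_map_C]
    have := maximalIdeal_height_eq_ringKrullDim (R := R)
    rw [hd] at this
    exact_mod_cast this
  -- a point where `G` does not vanish
  obtain ⟨t, ht⟩ : ∃ t : Fin d → Polynomial R, eval₂ Polynomial.C t G ∉ P := by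
    by_contra hcon
    push Not at hcon
    apply hne
    have hinj : Function.Injective (map (σ := Fin d) (Polynomial.C (R := ResidueField R))) :=
      map_injective _ Polynomial.C_injective
    apply hinj
    rw [map_zero]
    apply MvPolynomial.funext
    intro x
    choose t ht using fun i => hφs (x i)
    have h1 := (hker _).mp (hcon t)
    rw [hom_eval₂] at h1
    rw [map_zero, eval_map, eval₂_map]
    have e1 : (Polynomial.C (R := ResidueField R)).comp (residue R) = φ.comp Polynomial.C := by
      ext1 r; simp [φ]
    have e2 : (fun i => φ (t i)) = x := by ext1 i; exact ht i
    rw [e1, ← e2]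
    exact h1
  obtain ⟨j, hj⟩ : ∃ j, t j ∉ P := by
    by_contra hcon
    push Not at hcon
    apply ht
    rw [hker, hom_eval₂]
    have : (fun i => φ (t i)) = fun i => 0 * (fun _ => (0 : Polynomial (ResidueField R))) i := by
      ext1 i; simpa using (hker _).mp (hcon i)
    rw [this, eval2_homog_smul _ _ hG, zero_pow hn.ne', zero_mul]
  let g : Fin d → Polynomial R := fun i => t j * Polynomial.C (s i) - Polynomial.C (s j) * t i
  classical
  let T : Finset (Polynomial R) := (Finset.univ.erase j).image g
  have hg : ∀ i, g i ∈ Ideal.span (T : Set (Polynomial R)) := by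
    intro i
    by_cases hij : i = j
    · subst hij
      have : g i = 0 := by simp only [g]; ring
      rw [this]; exact zero_mem _
    · exact Ideal.subset_span (by
        rw [Finset.mem_coe]
        exact Finset.mem_image_of_mem _ (Finset.mem_erase.mpr ⟨hij, Finset.mem_univ _⟩))
  have hsP : ∀ i, Polynomial.C (s i) ∈ P := fun i =>
    Ideal.mem_map_of_mem _ (hs ▸ Ideal.subset_span ⟨i, rfl⟩)
  have hrel : Polynomial.C (s j) ^ n * eval₂ Polynomial.C t G ∈
      Ideal.span (T : Set (Polynomial R)) := by
    let π := Ideal.Quotient.mk (Ideal.span (T : Set (Polynomial R)))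
    rw [← Ideal.Quotient.eq_zero_iff_mem]
    change π _ = 0
    rw [← eval2_homog_smul _ _ hG, hom_eval₂]
    have : (fun i => π (Polynomial.C (s j) * t i)) =
        fun i => π (t j * Polynomial.C (s i)) := by
      ext1 i
      exact (Ideal.Quotient.eq.mpr (hg i)).symm
    rw [this, ← hom_eval₂ G Polynomial.C π, eval2_homog_smul _ _ hG]
    have h2 : eval₂ Polynomial.C (fun i => Polynomial.C (s i)) G = 0 := by
      have := congrArg (Polynomial.C (R := R)) h0
      rw [map_zero, eval, coe_eval₂Hom, hom_eval₂] at this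
      exact this
    rw [h2, mul_zero, map_zero]
  have hmin : P ∈ (Ideal.span (T : Set (Polynomial R))).minimalPrimes := by
    refine ⟨⟨hPp, ?_⟩, ?_⟩
    · rw [Ideal.span_le]
      intro x hx
      rw [Finset.mem_coe] at hx
      obtain ⟨i, -, rfl⟩ := Finset.mem_image.mp hx
      exact P.sub_mem (P.mul_mem_left _ (hsP i)) (P.mul_mem_right _ (hsP j))
    · rintro Q ⟨hQ, hTQ⟩ hQP
      have hsj : Polynomial.C (s j) ∈ Q := by
        rcases hQ.mem_or_mem (hTQ hrel) with h | h
        · exact hQ.mem_of_pow_mem _ h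
        · exact absurd (hQP h) ht
      rw [hP, Ideal.map_le_iff_le_comap, ← hs, Ideal.span_le]
      rintro _ ⟨i, rfl⟩
      change Polynomial.C (s i) ∈ Q
      have h3 : t j * Polynomial.C (s i) ∈ Q := by
        have := Q.add_mem (hTQ (hg i)) (Q.mul_mem_right (t i) hsj)
        simpa [g] using this
      exact (hQ.mem_or_mem h3).resolve_left fun h => hj (hQP h)
  have hle := Ideal.height_le_card_of_mem_minimalPrimes_span_finset hmin
  have hcard : T.card < d := by
    calc T.card ≤ (Finset.univ.erase j).card := Finset.card_image_le
      _ < (Finset.univ : Finset (Fin d)).card := Finset.card_erase_lt_of_mem (Finset.mem_univ _)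
      _ = d := by simp
  rw [hht] at hle
  exact absurd (Nat.cast_le.mp hle) (not_le.mpr hcard)

open MvPolynomial IsLocalRing in
theorem exists_homog {R : Type*} [CommRing R] [IsLocalRing R]
    {d n : ℕ} (s : Fin d → R) (hs : Ideal.span (Set.range s) = maximalIdeal R) (y : R)
    (hy : y ∈ maximalIdeal R ^ (n + 1)) :
    ∃ H : MvPolynomial (Fin d) R, H.IsHomogeneous n ∧ map (residue R) H = 0 ∧ eval s H = y := by
  rw [pow_succ'] at hy
  induction hy using Submodule.mul_induction_on' with
  | mem_mul_mem a ha b hb =>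
    rw [← hs, Ideal.mem_span_pow_iff_exists_isHomogeneous] at hb
    obtain ⟨H, hH, rfl⟩ := hb
    refine ⟨C a * H, by simpa using (isHomogeneous_C (Fin d) a).mul hH, ?_, by simp⟩
    rw [map_mul, map_C, (residue_eq_zero_iff a).mpr ha, C_0, zero_mul]
  | add x _ y _ hx hy =>
    obtain ⟨H, h1, h2, h3⟩ := hx
    obtain ⟨K, k1, k2, k3⟩ := hy
    exact ⟨H + K, h1.add k1, by rw [map_add, h2, k2, add_zero], by rw [map_add, h3, k3]⟩

open MvPolynomial IsLocalRing in
theorem mem_pow_of_pow_mem {R : Type*} [CommRing R] [IsLocalRing R]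
    (hreg : IsRegularLocal R) (x : R) (b c : ℕ) (hc : 0 < c)
    (h : x ^ c ∈ maximalIdeal R ^ (b * c)) : x ∈ maximalIdeal R ^ b := by
  obtain ⟨hN, d, s, hs, hd⟩ := hreg
  suffices ∀ a ≤ b, x ∈ maximalIdeal R ^ a from this b le_rfl
  intro a
  induction a with
  | zero => simp
  | succ a ih =>
    intro hab
    have hx := ih (by omega)
    rw [← hs, Ideal.mem_span_pow_iff_exists_isHomogeneous] at hx
    obtain ⟨F, hF, hFx⟩ := hx
    have hxc : x ^ c ∈ maximalIdeal R ^ (a * c + 1) :=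
      Ideal.pow_le_pow_right (by nlinarith) h
    obtain ⟨H, h1, h2, h3⟩ := exists_homog s hs _ hxc
    have := no_relation s hs hd (F ^ c - H) ((hF.pow c).sub h1)
      (by rw [map_sub, map_pow, hFx, h3, sub_self])
    rw [map_sub, h2, sub_zero, map_pow] at this
    have hF0 : map (residue R) F = 0 := pow_eq_zero_iff hc.ne' |>.mp this
    rw [← hFx, eval_eq']
    refine Ideal.sum_mem _ fun m hm => ?_
    rw [pow_succ']
    refine Ideal.mul_mem_mul ?_ ?_
    · rw [← residue_eq_zero_iff, ← coeff_map, hF0, coeff_zero]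
    · have hdeg : ∑ i, m i = a := by
        rw [hF.degree_eq_sum_deg_support hm]
        exact (Finset.sum_subset (Finset.subset_univ _) fun i _ hi => by simpa using hi).symm
      rw [← hdeg, ← Finset.prod_pow_eq_pow_sum]
      exact Ideal.prod_mem_prod fun i _ =>
        Ideal.pow_mem_pow (hs ▸ Ideal.subset_span ⟨i, rfl⟩) _

theorem le_idealOrder_iff {R : Type*} [CommRing R] (m K : Ideal R) (b : ℕ) :
    (b : ℕ∞) ≤ idealOrder m K ↔ K ≤ m ^ b := by
  constructor
  · intro h
    by_contra hK
    have hb : b ≠ 0 := by rintro rfl; simp at hK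
    have : idealOrder m K ≤ ((b - 1 : ℕ) : ℕ∞) := by
      refine sSup_le ?_
      rintro _ ⟨s, rfl, hs⟩
      rw [Nat.cast_le]
      by_contra hlt
      exact hK (hs.trans (Ideal.pow_le_pow_right (by omega)))
    have := Nat.cast_le.mp (h.trans this)
    omega
  · intro h
    exact le_sSup ⟨b, rfl, h⟩

/-- `ν(J^c + I^b) ≥ bc` if and only if `ν(J) ≥ b` and `ν(I) ≥ c`
(the singular locus of the intersection of basic objects). -/
theorem order_intersection_basic_objects {R : Type*} [CommRing R] [IsLocalRing R]
    (hreg : IsRegularLocal R) (I J : Ideal R) (b c : ℕ) (hb : 0 < b) (hc : 0 < c) :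
    ((b * c : ℕ) : ℕ∞) ≤ idealOrder (IsLocalRing.maximalIdeal R) (J ^ c + I ^ b) ↔
      ((b : ℕ∞) ≤ idealOrder (IsLocalRing.maximalIdeal R) J ∧
        (c : ℕ∞) ≤ idealOrder (IsLocalRing.maximalIdeal R) I) := by
  rw [le_idealOrder_iff, le_idealOrder_iff, le_idealOrder_iff, Submodule.add_eq_sup, sup_le_iff]
  refine and_congr ⟨fun h x hx => ?_, fun h => ?_⟩ ⟨fun h x hx => ?_, fun h => ?_⟩
  · exact mem_pow_of_pow_mem hreg x b c hc (h (Ideal.pow_mem_pow hx c))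
  · rw [pow_mul]; exact Ideal.pow_right_mono h c
  · exact mem_pow_of_pow_mem hreg x c b hb (mul_comm b c ▸ h (Ideal.pow_mem_pow hx b))
  · rw [mul_comm, pow_mul]; exact Ideal.pow_right_mono h b
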